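/- In the degree-three game G constructed from an X3C instance, let 0 ≤ δ < 1 and let 𝒱 be a payment promise with 𝒳⋆_{G[𝒱]} ⊆ ∏_{i∈N} O_i and cost(𝒱) ≤ δ. Then for every element a_i ∈ 𝒜 and every undominated strategy profile x ∈ 𝒳⋆_{G[𝒱]}, exactly one of the three set players C_i^1, C_i^2, C_i^3 containing a_i plays its T-strategy in x. -/

import Mathlib

/-!
Let `x` be an undominated profile and `a` an element. Every undominated profile has `a` playing
`T`, so `T` dominates `F` for `a` once the payments are made. Against the other strategies of `x`,
deviating to `F` therefore gains `a` at most the payment it receives at `x`, which is at most the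
cost and hence less than `1`. So the number of sets containing `a` that play `T` is not `0`, `2`
or `3`; being at most `3`, it is `1`.
-/

/-- In a game with player set `ι` and strategy sets `S i`, strategy `x` of player `i`
(weakly) dominates strategy `y`: `x` is at least as good against every profile of the
other players' strategies and strictly better against at least one. -/
def Dominates {ι : Type*} [DecidableEq ι] {S : ι → Type*}
    (U : ι → (∀ j, S j) → ℝ) (i : ι) (x y : S i) : Prop :=
  (∀ σ : ∀ j, S j, U i (Function.update σ i y) ≤ U i (Function.update σ i x)) ∧
  (∃ σ : ∀ j, S j, U i (Function.update σ i y) < U i (Function.update σ i x))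

/-- A strategy of player `i` is undominated if no strategy of player `i` dominates it. -/
def Undominated {ι : Type*} [DecidableEq ι] {S : ι → Type*}
    (U : ι → (∀ j, S j) → ℝ) (i : ι) (x : S i) : Prop :=
  ¬ ∃ y : S i, Dominates U i y x

/-- The set `𝒳⋆` of strategy profiles consisting entirely of undominated strategies. -/
def UndomProfiles {ι : Type*} [DecidableEq ι] {S : ι → Type*}
    (U : ι → (∀ j, S j) → ℝ) : Set (∀ j, S j) :=
  {σ | ∀ i, Undominated U i (σ i)}

/-- The cost of a payment promise `V` for the game with utilities `U`:
the maximum, over undominated profiles of the modified game `G[V]`,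
of the total payment. -/
noncomputable def gameCost {ι : Type*} [DecidableEq ι] [Fintype ι] {S : ι → Type*}
    (U V : ι → (∀ j, S j) → ℝ) : ℝ :=
  sSup ((fun σ => ∑ i, V i σ) '' UndomProfiles (fun i σ => U i σ + V i σ))

/-- The rectangular strategy-profile region `O_1 × ⋯ × O_n`. -/
def rectSet {ι : Type*} {S : ι → Type*} (O : ∀ i, Set (S i)) : Set (∀ j, S j) :=
  {σ | ∀ i, σ i ∈ O i}

/-- `S` is an exact cover of the X3C instance with `3 * nh` elements (indexed by
`ZMod m`, `m = 3 * nh`) and sets `C`: `|S| = nh` and every element is covered. -/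
def IsExactCover (m nh : ℕ) (C : ZMod m → Finset (ZMod m)) (S : Set (ZMod m)) : Prop :=
  S.ncard = nh ∧ ∀ a : ZMod m, ∃ j ∈ S, a ∈ C j

/-- The utilities of the degree-three graphical game: players are elements (left) and
sets (right), every player plays a Boolean (`true` = the `T`-strategy). An element
player `a` receives 1 iff it plays its `F`-strategy and the number of sets containing
`a` that play their `T`-strategy is 0, 2 or 3; set players always receive 0. -/
def dGame (m : ℕ) [NeZero m] (C : ZMod m → Finset (ZMod m)) :
    (ZMod m ⊕ ZMod m) → ((ZMod m ⊕ ZMod m) → Bool) → ℝ :=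
  fun p σ =>
    match p with
    | Sum.inl a =>
        if σ (Sum.inl a) = false ∧
            ((Finset.univ.filter fun j => a ∈ C j ∧ σ (Sum.inr j) = true).card = 0 ∨
             (Finset.univ.filter fun j => a ∈ C j ∧ σ (Sum.inr j) = true).card = 2 ∨
             (Finset.univ.filter fun j => a ∈ C j ∧ σ (Sum.inr j) = true).card = 3)
        then 1 else 0
    | Sum.inr _ => 0

/-- The desired strategy sets: `O_{a_i} = {T_{a_i}}` for element players and
`O_{C_j} = {T_{C_j}, F_{C_j}}` for set players. -/
def dDesired (m : ℕ) : (ZMod m ⊕ ZMod m) → Set Bool :=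
  fun p => match p with
  | Sum.inl _ => {true}
  | Sum.inr _ => Set.univ

section Domination

variable {ι : Type*} [DecidableEq ι] {S : ι → Type*} {U : ι → (∀ j, S j) → ℝ} {i : ι}

lemma not_dominates_self (s : S i) : ¬ Dominates U i s s :=
  fun ⟨_, _, hlt⟩ => hlt.false

lemma Dominates.trans {s t u : S i} (hst : Dominates U i s t) (htu : Dominates U i t u) :
    Dominates U i s u :=
  ⟨fun σ => (htu.1 σ).trans (hst.1 σ), htu.2.imp fun σ hσ => hσ.trans_le (hst.1 σ)⟩

lemma exists_undominated_dominates [Finite (S i)] {s : S i} (hs : ¬ Undominated U i s) :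
    ∃ t, Undominated U i t ∧ Dominates U i t s := by
  have : IsTrans (S i) (Dominates U i) := ⟨fun _ _ _ => Dominates.trans⟩
  have : Std.Irrefl (Dominates U i) := ⟨not_dominates_self⟩
  have hwf : WellFounded (Dominates U i) := Finite.wellFounded_of_trans_of_irrefl _
  obtain ⟨t, hts, hmin⟩ := hwf.has_min {t | Dominates U i t s} (not_not.mp hs)
  exact ⟨t, fun ⟨u, hut⟩ => hmin u (hut.trans hts) hut, hts⟩

lemma update_mem_undomProfiles {x : ∀ j, S j} (hx : x ∈ UndomProfiles U) {s : S i}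
    (hs : Undominated U i s) : Function.update x i s ∈ UndomProfiles U :=
  (Function.forall_update_iff x fun j t => Undominated U j t).mpr ⟨hs, fun j _ => hx j⟩

lemma utility_update_le_of_forall_eq [Finite (S i)] {x : ∀ j, S j} (hx : x ∈ UndomProfiles U)
    (hi : ∀ y ∈ UndomProfiles U, y i = x i) (s : S i) :
    U i (Function.update x i s) ≤ U i x := by
  have eq_of_undominated (t : S i) (ht : Undominated U i t) : t = x i := by
    simpa using hi _ (update_mem_undomProfiles hx ht)
  by_cases hs : Undominated U i s
  · rw [eq_of_undominated s hs, Function.update_eq_self]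
  · obtain ⟨t, ht, hts⟩ := exists_undominated_dominates hs
    simpa [eq_of_undominated t ht] using hts.1 x

end Domination

section Payment

variable {ι : Type*} [DecidableEq ι] [Fintype ι] {S : ι → Type*} [∀ j, Finite (S j)]
  {U V : ι → (∀ j, S j) → ℝ} {x : ∀ j, S j}

lemma sum_payment_le_gameCost (hx : x ∈ UndomProfiles fun j σ => U j σ + V j σ) :
    ∑ j, V j x ≤ gameCost U V :=
  le_csSup (Set.toFinite _).bddAbove (Set.mem_image_of_mem _ hx)

lemma utility_update_le_add_gameCost (hV : ∀ j σ, 0 ≤ V j σ)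
    (hx : x ∈ UndomProfiles fun j σ => U j σ + V j σ) {i : ι}
    (hi : ∀ y ∈ UndomProfiles fun j σ => U j σ + V j σ, y i = x i) (s : S i) :
    U i (Function.update x i s) ≤ U i x + gameCost U V :=
  calc
    U i (Function.update x i s)
    _ ≤ U i (Function.update x i s) + V i (Function.update x i s) :=
      le_add_of_nonneg_right (hV i _)
    _ ≤ U i x + V i x := utility_update_le_of_forall_eq hx hi s
    _ ≤ U i x + ∑ j, V j x := by
      gcongr
      exact Finset.single_le_sum (f := (V · x)) (fun j _ => hV j x) (Finset.mem_univ i)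
    _ ≤ U i x + gameCost U V := by
      gcongr
      exact sum_payment_le_gameCost hx

end Payment

section CoverGame

variable {m : ℕ} [NeZero m] {C : ZMod m → Finset (ZMod m)} {a : ZMod m}
  {σ : ZMod m ⊕ ZMod m → Bool}

/-- The sets of an X3C instance that contain the element `a` and play their `T`-strategy in the
profile `σ`. The utility of the element player `a` depends on the set players only through the
cardinality of this collection. -/
def selectedCovers (C : ZMod m → Finset (ZMod m)) (a : ZMod m) (σ : ZMod m ⊕ ZMod m → Bool) :
    Finset (ZMod m) :=
  {j | a ∈ C j ∧ σ (Sum.inr j) = true}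

lemma card_selectedCovers_le : (selectedCovers C a σ).card ≤ {j | a ∈ C j}.ncard := by
  rw [← Set.ncard_coe_finset]
  refine Set.ncard_le_ncard fun j hj => ?_
  exact (Finset.mem_filter_univ j |>.mp hj).1

lemma dGame_inl_of_eq_true (ha : σ (Sum.inl a) = true) : dGame m C (Sum.inl a) σ = 0 := by
  simp [dGame, ha]

lemma dGame_inl_update_false :
    dGame m C (Sum.inl a) (Function.update σ (Sum.inl a) false) =
      if (selectedCovers C a σ).card = 0 ∨ (selectedCovers C a σ).card = 2 ∨
        (selectedCovers C a σ).card = 3 then 1 else 0 := by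
  simp [dGame, selectedCovers]

lemma card_selectedCovers_eq_one (hocc : {j | a ∈ C j}.ncard ≤ 3)
    (hlt : dGame m C (Sum.inl a) (Function.update σ (Sum.inl a) false) < 1) :
    (selectedCovers C a σ).card = 1 := by
  have hle := (card_selectedCovers_le (σ := σ)).trans hocc
  rw [dGame_inl_update_false] at hlt
  split_ifs at hlt with hcard
  · exact absurd hlt (lt_irrefl 1)
  · omega

theorem deg3_claim1_general {V : ZMod m ⊕ ZMod m → (ZMod m ⊕ ZMod m → Bool) → ℝ}
    (hV : ∀ p σ, 0 ≤ V p σ) (hcost : gameCost (dGame m C) V < 1)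
    (hocc : {j | a ∈ C j}.ncard ≤ 3)
    (hT : ∀ y ∈ UndomProfiles fun p σ => dGame m C p σ + V p σ, y (Sum.inl a) = true)
    {x : ZMod m ⊕ ZMod m → Bool} (hx : x ∈ UndomProfiles fun p σ => dGame m C p σ + V p σ) :
    ∃! j, a ∈ C j ∧ x (Sum.inr j) = true := by
  have hxa := hT x hx
  have hdeviate : dGame m C (Sum.inl a) (Function.update x (Sum.inl a) false) < 1 :=
    calc
      dGame m C (Sum.inl a) (Function.update x (Sum.inl a) false)
      _ ≤ dGame m C (Sum.inl a) x + gameCost (dGame m C) V :=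
        utility_update_le_add_gameCost hV hx (fun y hy => (hT y hy).trans hxa.symm) false
      _ = gameCost (dGame m C) V := by rw [dGame_inl_of_eq_true hxa, zero_add]
      _ < 1 := hcost
  exact (Fintype.existsUnique_iff_card_one _).mpr (card_selectedCovers_eq_one hocc hdeviate)

end CoverGame

/-- with `0 ≤ δ < 1` and a payment promise implementing the desired
region of the degree-three game with cost at most `δ`, in every undominated strategy
profile, for every element `a` exactly one of the sets containing `a` plays its
`T`-strategy. -/
theorem deg3_claim1 (m nh : ℕ) [NeZero m] (hm : m = 3 * nh)
    (C : ZMod m → Finset (ZMod m))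
    (hC : ∀ j : ZMod m, (C j).card = 3)
    (hocc : ∀ a : ZMod m, Set.ncard {j : ZMod m | a ∈ C j} = 3)
    (δ : ℝ) (hδ0 : 0 ≤ δ) (hδ1 : δ < 1)
    (V : (ZMod m ⊕ ZMod m) → ((ZMod m ⊕ ZMod m) → Bool) → ℝ)
    (hV : ∀ p σ, 0 ≤ V p σ)
    (himpl : UndomProfiles (fun p σ => dGame m C p σ + V p σ) ⊆ rectSet (dDesired m))
    (hcost : gameCost (dGame m C) V ≤ δ) :
    ∀ a : ZMod m, ∀ x ∈ UndomProfiles (fun p σ => dGame m C p σ + V p σ),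
      ∃! j : ZMod m, a ∈ C j ∧ x (Sum.inr j) = true :=
  fun a _ hx => deg3_claim1_general hV (hcost.trans_lt hδ1) (hocc a).le
    (fun _ hy => himpl hy (Sum.inl a)) hx
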